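/- Let d ∈ (0, 1/2) (with d ≠ 0). Then the integral ∫_ℝ ((1−x)_+^d − (−x)_+^d)^2 dx is finite and equals B(d+1, d+1)/cos(dπ), where B is the Beta function and x_+ = max(x,0). -/

import Mathlib

open MeasureTheory Real

lemma aux_beta01 {a b : ℝ} (ha : 0 < a) (hb : 0 < b) :
    IntegrableOn (fun x : ℝ => x ^ (a - 1) * (1 - x) ^ (b - 1)) (Set.Ioo 0 1) ∧
    ∫ x in Set.Ioo (0:ℝ) 1, x ^ (a - 1) * (1 - x) ^ (b - 1) =
      Gamma a * Gamma b / Gamma (a + b) := by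
  have heq : ∀ x ∈ Set.Ioo (0:ℝ) 1,
      (x : ℂ) ^ ((a:ℂ) - 1) * (1 - (x : ℂ)) ^ ((b:ℂ) - 1)
        = ((x ^ (a - 1) * (1 - x) ^ (b - 1) : ℝ) : ℂ) := by
    intro x hx
    rw [Complex.ofReal_mul, Complex.ofReal_cpow hx.1.le, Complex.ofReal_cpow (by linarith [hx.2])]
    push_cast
    rfl
  have hc := Complex.betaIntegral_convergent (u := a) (v := b) (by simpa) (by simpa)
  rw [intervalIntegrable_iff_integrableOn_Ioo_of_le zero_le_one] at hc
  have hc2 : IntegrableOn (fun x : ℝ => ((x ^ (a - 1) * (1 - x) ^ (b - 1) : ℝ) : ℂ))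
      (Set.Ioo 0 1) := hc.congr_fun heq measurableSet_Ioo
  refine ⟨?_, ?_⟩
  · have h := Integrable.re hc2
    simp only [RCLike.re_to_complex, Complex.ofReal_re] at h
    exact h
  · have h := Complex.betaIntegral_eq_Gamma_mul_div a b (by simpa) (by simpa)
    rw [Complex.betaIntegral, intervalIntegral.integral_of_le zero_le_one,
      integral_Ioc_eq_integral_Ioo, setIntegral_congr_fun measurableSet_Ioo heq,
      integral_complex_ofReal, ← Complex.ofReal_add, Complex.Gamma_ofReal, Complex.Gamma_ofReal,
      Complex.Gamma_ofReal] at h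
    exact_mod_cast h

lemma aux_betaInf {d : ℝ} (h0 : 0 < d) (h1 : d < 1/2) :
    IntegrableOn (fun s : ℝ => s ^ (d - 1) * (1 + s) ^ (d - 1)) (Set.Ioi 0) ∧
    ∫ s in Set.Ioi (0:ℝ), s ^ (d - 1) * (1 + s) ^ (d - 1) =
      Gamma (1 - 2 * d) * Gamma d / Gamma (1 - d) := by
  obtain ⟨hi, hv⟩ := aux_beta01 (a := 1 - 2 * d) (b := d) (by linarith) h0
  have himg : (fun t : ℝ => t⁻¹ - 1) '' Set.Ioo 0 1 = Set.Ioi 0 := by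
    ext s
    simp only [Set.mem_image, Set.mem_Ioo, Set.mem_Ioi]
    constructor
    · rintro ⟨t, ⟨ht0, ht1⟩, rfl⟩
      have := (one_lt_inv₀ ht0).2 ht1
      linarith
    · intro hs
      refine ⟨(1 + s)⁻¹, ⟨by positivity, inv_lt_one_of_one_lt₀ (by linarith)⟩, by simp⟩
  have hder : ∀ t ∈ Set.Ioo (0:ℝ) 1,
      HasDerivWithinAt (fun t : ℝ => t⁻¹ - 1) (-(t ^ 2)⁻¹) (Set.Ioo 0 1) t := by
    intro t ht
    exact ((hasDerivAt_inv ht.1.ne').sub_const 1).hasDerivWithinAt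
  have hinj : Set.InjOn (fun t : ℝ => t⁻¹ - 1) (Set.Ioo 0 1) := by
    intro x _ y _ h
    simpa using h
  have heq : ∀ t ∈ Set.Ioo (0:ℝ) 1, t ^ (1 - 2 * d - 1) * (1 - t) ^ (d - 1) =
      |-(t ^ 2)⁻¹| • ((t⁻¹ - 1) ^ (d - 1) * (1 + (t⁻¹ - 1)) ^ (d - 1)) := by
    intro t ht
    have ht0 := ht.1
    have e1 : t⁻¹ - 1 = (1 - t) * t⁻¹ := by field_simp
    have e2 : 1 + (t⁻¹ - 1) = t⁻¹ := by ring
    have e3 : t ^ (1 - 2 * d - 1) = (t^2)⁻¹ * (t⁻¹ ^ (d - 1) * t⁻¹ ^ (d - 1)) := by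
      rw [inv_rpow ht0.le, ← rpow_neg ht0.le, ← rpow_add ht0, ← rpow_natCast, ← rpow_neg ht0.le,
        ← rpow_add ht0]
      congr 1
      push_cast
      ring
    rw [e2, e1, mul_rpow (by linarith [ht.2]) (by positivity), abs_neg,
      abs_of_pos (by positivity), smul_eq_mul, e3]
    ring
  rw [← himg]
  refine ⟨?_, ?_⟩
  · rw [integrableOn_image_iff_integrableOn_abs_deriv_smul measurableSet_Ioo hder hinj]
    exact hi.congr_fun heq measurableSet_Ioo
  · rw [integral_image_eq_integral_abs_deriv_smul measurableSet_Ioo hder hinj,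
      ← setIntegral_congr_fun measurableSet_Ioo heq, hv]
    congr 2
    ring

lemma aux_bound {p s : ℝ} (hp0 : 0 < p) (hp : p < 1) (hs : 0 < s) :
    0 ≤ (1 + s) ^ p - s ^ p ∧ (1 + s) ^ p - s ^ p ≤ (1 + s) ^ (p - 1) ∧
      (1 + s) ^ (p - 1) ≤ s ^ (p - 1) := by
  have h3 : (1 + s) ^ (p - 1) ≤ s ^ (p - 1) :=
    rpow_le_rpow_of_nonpos hs (by linarith) (by linarith)
  refine ⟨?_, ?_, h3⟩
  · have := rpow_le_rpow hs.le (by linarith : s ≤ 1 + s) hp0.le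
    linarith
  · have e1 : (1 + s) ^ p = (1 + s) ^ (p - 1) * (1 + s) := by
      rw [← rpow_add_one (by positivity)]; congr 1; ring
    have e2 : s ^ p = s ^ (p - 1) * s := by
      rw [← rpow_add_one (by positivity)]; congr 1; ring
    rw [e1, e2]
    nlinarith

lemma aux_F {d : ℝ} (h0 : 0 < d) (h1 : d < 1/2) :
    IntegrableOn (fun s : ℝ => ((1 + s) ^ d - s ^ d) ^ 2) (Set.Ioi 0) ∧
    (1 + 2 * d) * ∫ s in Set.Ioi (0:ℝ), ((1 + s) ^ d - s ^ d) ^ 2 =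
      d * (Gamma (1 - 2 * d) * Gamma d / Gamma (1 - d)) - 1 := by
  obtain ⟨hi, hv⟩ := aux_betaInf h0 h1
  have hF : IntegrableOn (fun s : ℝ => ((1 + s) ^ d - s ^ d) ^ 2) (Set.Ioi 0) := by
    refine Integrable.mono' hi (by fun_prop) ?_
    refine (ae_restrict_iff' measurableSet_Ioi).2 (Filter.Eventually.of_forall fun s hs => ?_)
    obtain ⟨b1, b2, b3⟩ := aux_bound h0 (by linarith) hs
    rw [norm_of_nonneg (by positivity), sq]
    exact mul_le_mul (b2.trans b3) b2 b1 (b1.trans (b2.trans b3))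
  refine ⟨hF, ?_⟩
  have key := integral_Ioi_of_hasDerivAt_of_tendsto (a := 0) (m := 0)
    (f := fun s : ℝ => (s + 1/2) * ((1 + s) ^ d - s ^ d) ^ 2
      + (1/2) * ((1 + s) ^ (2 * d) - s ^ (2 * d)))
    (f' := fun s : ℝ => (1 + 2 * d) * ((1 + s) ^ d - s ^ d) ^ 2
      - d * (s ^ (d - 1) * (1 + s) ^ (d - 1))) ?_ ?_ ?_ ?_
  · rw [integral_sub (hF.const_mul _) (hi.const_mul _), integral_const_mul, integral_const_mul,
      hv] at key
    have z1 : (0:ℝ) ^ d = 0 := zero_rpow h0.ne'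
    have z2 : (0:ℝ) ^ (2 * d) = 0 := zero_rpow (by positivity)
    simp only [z1, z2, add_zero, one_rpow] at key
    linarith
  · apply Continuous.continuousWithinAt
    have c1 : Continuous fun s : ℝ => (1 + s) ^ d :=
      (continuous_const.add continuous_id).rpow_const (fun _ => Or.inr h0.le)
    have c2 : Continuous fun s : ℝ => s ^ d := continuous_id.rpow_const (fun _ => Or.inr h0.le)
    have c3 : Continuous fun s : ℝ => (1 + s) ^ (2 * d) :=
      (continuous_const.add continuous_id).rpow_const (fun _ => Or.inr (by positivity))
    have c4 : Continuous fun s : ℝ => s ^ (2 * d) :=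
      continuous_id.rpow_const (fun _ => Or.inr (by positivity))
    fun_prop
  · intro s hs
    have hs : 0 < s := hs
    have hs1 : 0 < 1 + s := by positivity
    have q1 : ∀ p : ℝ, HasDerivAt (fun s : ℝ => s ^ p) (p * s ^ (p - 1)) s :=
      fun p => Real.hasDerivAt_rpow_const (Or.inl hs.ne')
    have q2 : ∀ p : ℝ, HasDerivAt (fun s : ℝ => (1 + s) ^ p) (p * (1 + s) ^ (p - 1)) s := by
      intro p
      have := ((hasDerivAt_id s).const_add 1).rpow_const (p := p) (Or.inl hs1.ne')
      simpa using this
    have := (((hasDerivAt_id s).add_const (1/2)).mul (((q2 d).sub (q1 d)).pow 2)).add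
      (((q2 (2 * d)).sub (q1 (2 * d))).const_mul (1/2))
    refine this.congr_deriv ?_
    have e1 : (1 + s) ^ d = (1 + s) ^ (d - 1) * (1 + s) := by
      rw [← rpow_add_one (by positivity)]; congr 1; ring
    have e2 : s ^ d = s ^ (d - 1) * s := by
      rw [← rpow_add_one (by positivity)]; congr 1; ring
    have e3 : (1 + s) ^ (2 * d - 1) = (1 + s) ^ (d - 1) * (1 + s) ^ (d - 1) * (1 + s) := by
      rw [← rpow_add hs1, ← rpow_add_one (by positivity)]; congr 1; ring
    have e4 : s ^ (2 * d - 1) = s ^ (d - 1) * s ^ (d - 1) * s := by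
      rw [← rpow_add hs, ← rpow_add_one (by positivity)]; congr 1; ring
    simp only [Pi.sub_apply, Pi.pow_apply, id_eq, e1, e2, e3, e4]
    push_cast
    ring
  · exact (hF.const_mul _).sub (hi.const_mul _)
  · have hb : ∀ᶠ s : ℝ in Filter.atTop, (s + 1/2) * ((1 + s) ^ d - s ^ d) ^ 2
      + (1/2) * ((1 + s) ^ (2 * d) - s ^ (2 * d)) ≤ 2 * (1 + s) ^ (-(1 - 2 * d)) := by
      filter_upwards [Filter.eventually_gt_atTop 0] with s hs
      obtain ⟨b1, b2, b3⟩ := aux_bound h0 (by linarith) hs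
      obtain ⟨c1, c2, c3⟩ := aux_bound (p := 2 * d) (by linarith) (by linarith) hs
      have hs1 : 0 < 1 + s := by positivity
      have e3 : (1 + s) ^ (2 * d - 1) = (1 + s) * ((1 + s) ^ (d - 1)) ^ 2 := by
        rw [sq, ← rpow_add hs1, mul_comm (1 + s), ← rpow_add_one (by positivity)]; congr 1; ring
      have e5 : (s + 1/2) * ((1 + s) ^ d - s ^ d) ^ 2 ≤ (1 + s) * ((1 + s) ^ (d - 1)) ^ 2 := by
        apply mul_le_mul (by linarith) (pow_le_pow_left₀ b1 b2 2) (by positivity) hs1.le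
      rw [neg_sub]
      linarith
    have hn : ∀ᶠ s : ℝ in Filter.atTop, 0 ≤ (s + 1/2) * ((1 + s) ^ d - s ^ d) ^ 2
      + (1/2) * ((1 + s) ^ (2 * d) - s ^ (2 * d)) := by
      filter_upwards [Filter.eventually_gt_atTop 0] with s hs
      obtain ⟨c1, c2, c3⟩ := aux_bound (p := 2 * d) (by linarith) (by linarith) hs
      positivity
    have ht : Filter.Tendsto (fun s : ℝ => 2 * (1 + s) ^ (-(1 - 2 * d))) Filter.atTop (nhds 0) := by
      have := ((tendsto_rpow_neg_atTop (y := 1 - 2 * d) (by linarith)).comp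
        (Filter.tendsto_atTop_add_const_left Filter.atTop (1:ℝ) Filter.tendsto_id)).const_mul 2
      simpa using this
    exact tendsto_of_tendsto_of_tendsto_of_le_of_le' tendsto_const_nhds ht hn hb

lemma aux_gamma {d : ℝ} (h0 : 0 < d) (h1 : d < 1/2) :
    d * (Gamma (1 - 2 * d) * Gamma d / Gamma (1 - d)) / (1 + 2 * d) =
      (Gamma (d + 1) * Gamma (d + 1) / Gamma (d + 1 + (d + 1))) / cos (d * π) := by
  have r1 := Real.Gamma_mul_Gamma_one_sub d
  have r2 := Real.Gamma_mul_Gamma_one_sub (2 * d)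
  have s1 : 0 < sin (π * d) := sin_pos_of_pos_of_lt_pi (by positivity) (by nlinarith [pi_pos])
  have c1 : 0 < cos (π * d) :=
    cos_pos_of_mem_Ioo ⟨by nlinarith [pi_pos], by nlinarith [pi_pos]⟩
  have g1 := Gamma_pos_of_pos h0
  have g2 : 0 < Gamma (2 * d) := Gamma_pos_of_pos (by positivity)
  have g3 : 0 < Gamma (1 - d) := Gamma_pos_of_pos (by linarith)
  have g4 : 0 < Gamma (1 - 2 * d) := Gamma_pos_of_pos (by linarith)
  have e0 : d + 1 + (d + 1) = (2 * d + 1) + 1 := by ring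
  rw [e0, Gamma_add_one (s := 2 * d + 1) (by positivity), Gamma_add_one (s := 2 * d) (by positivity),
    Gamma_add_one h0.ne',
    mul_comm d π]
  rw [show π * (2 * d) = 2 * (π * d) by ring, sin_two_mul] at r2
  have k1 : Gamma (1 - d) = π / sin (π * d) / Gamma d := by rw [← r1]; field_simp
  have k2 : Gamma (1 - 2 * d) = π / (2 * sin (π * d) * cos (π * d)) / Gamma (2 * d) := by
    rw [← r2]; field_simp
  rw [k1, k2]
  have := pi_pos
  clear k1 k2 r1 r2
  generalize sin (π * d) = S at *
  generalize cos (π * d) = C at *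
  generalize Gamma (2 * d) = G at *
  field_simp
  try ring

theorem stmt_3 (d : ℝ) (hd : d ∈ Set.Ioo (0 : ℝ) (1/2)) :
    Integrable (fun x : ℝ => ((max (1 - x) 0) ^ d - (max (-x) 0) ^ d) ^ 2) ∧
    ∫ x : ℝ, ((max (1 - x) 0) ^ d - (max (-x) 0) ^ d) ^ 2 =
      (Real.Gamma (d + 1) * Real.Gamma (d + 1) / Real.Gamma (d + 1 + (d + 1))) /
        Real.cos (d * Real.pi) := by
  obtain ⟨h0, h1⟩ := hd
  obtain ⟨hF, hFv⟩ := aux_F h0 h1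
  set f : ℝ → ℝ := fun x : ℝ => ((max (1 - x) 0) ^ d - (max (-x) 0) ^ d) ^ 2 with hf
  have z1 : (0:ℝ) ^ d = 0 := zero_rpow h0.ne'
  have hA : Set.EqOn (fun s : ℝ => ((1 + s) ^ d - s ^ d) ^ 2) (fun s => f (-s)) (Set.Ioi 0) := by
    intro s hs
    have hs : 0 < s := hs
    simp only [hf, sub_neg_eq_add, neg_neg]
    rw [max_eq_left (by linarith), max_eq_left hs.le]
  have hB : Set.EqOn (fun x : ℝ => (1 - x) ^ (2 * d)) f (Set.Ioc 0 1) := by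
    intro x hx
    have h2 : 0 ≤ 1 - x := by linarith [hx.2]
    simp only [hf]
    rw [max_eq_left h2, max_eq_right (by linarith [hx.1]), z1, sub_zero, ← rpow_natCast,
      ← rpow_mul h2]
    congr 1
    push_cast
    ring
  have hC : Set.EqOn (fun _ : ℝ => (0:ℝ)) f (Set.Ioi 1) := by
    intro x hx
    have hx : 1 < x := hx
    simp only [hf]
    rw [max_eq_right (by linarith), max_eq_right (by linarith), z1]
    simp
  have iA : IntegrableOn f (Set.Iic 0) := by
    have := hF.congr_fun hA measurableSet_Ioi
    rw [← integrableOn_Ici_iff_integrableOn_Ioi] at this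
    have h2 := (Measure.measurePreserving_neg (volume : Measure ℝ)).integrableOn_comp_preimage
      (Homeomorph.neg ℝ).measurableEmbedding (f := f) (s := Set.Iic 0)
    refine h2.1 ?_
    simpa [Function.comp_def] using this
  have hcont : Continuous fun x : ℝ => (1 - x) ^ (2 * d) :=
    (continuous_const.sub continuous_id).rpow_const (fun _ => Or.inr (by positivity))
  have iB : IntegrableOn f (Set.Ioc 0 1) :=
    (hcont.integrableOn_Ioc).congr_fun hB measurableSet_Ioc
  have iC : IntegrableOn f (Set.Ioi 1) := integrableOn_zero.congr_fun hC measurableSet_Ioi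
  have iBC : IntegrableOn f (Set.Ioi 0) := by
    rw [← Set.Ioc_union_Ioi_eq_Ioi (zero_le_one' ℝ)]
    exact iB.union iC
  have iAll : Integrable f := by
    rw [← integrableOn_univ, ← Set.Iic_union_Ioi (a := (0:ℝ))]
    exact iA.union iBC
  refine ⟨iAll, ?_⟩
  have vA : ∫ x in Set.Iic 0, f x = ∫ s in Set.Ioi (0:ℝ), ((1 + s) ^ d - s ^ d) ^ 2 := by
    rw [setIntegral_congr_fun measurableSet_Ioi hA, integral_comp_neg_Ioi, neg_zero]
  have vB : ∫ x in Set.Ioc 0 1, f x = 1 / (2 * d + 1) := by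
    rw [← setIntegral_congr_fun measurableSet_Ioc hB,
      ← intervalIntegral.integral_of_le zero_le_one,
      intervalIntegral.integral_comp_sub_left (fun x => x ^ (2 * d)) 1,
      integral_rpow (Or.inl (by linarith))]
    simp [zero_rpow (by positivity : 2 * d + 1 ≠ 0)]
  have vC : ∫ x in Set.Ioi 1, f x = 0 := by
    rw [← setIntegral_congr_fun measurableSet_Ioi hC]
    simp
  have vBC : ∫ x in Set.Ioi 0, f x = 1 / (2 * d + 1) := by
    rw [← Set.Ioc_union_Ioi_eq_Ioi (zero_le_one' ℝ),
      setIntegral_union (Set.Ioc_disjoint_Ioi le_rfl) measurableSet_Ioi iB iC, vB, vC, add_zero]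
  rw [← aux_gamma h0 h1, ← setIntegral_univ, ← Set.Iic_union_Ioi (a := (0:ℝ)),
    setIntegral_union (Set.Iic_disjoint_Ioi le_rfl) measurableSet_Ioi iA iBC, vA, vBC,
    eq_div_iff (by positivity), add_mul, mul_comm _ (1 + 2 * d), hFv, add_comm (2 * d) 1,
    one_div, inv_mul_cancel₀ (by positivity)]
  ring
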